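/- arXiv:2310.08603 — 3 statements merged into one kernel-verified Lean document; each statement's English description precedes it below -/
import Mathlib

section
/- (Sufficient and necessary condition, 1-dimensional case.) Under the one-dimensional two-step trust-region setup with a < 0, b < 0, a + ω₂ > 0, b + ω̃₂ > 0, x̃₁ ≠ x₁, and κ := (x₁ − x₀)/(x̃₁ − x₁), and for any ε with 0 ≤ ε ≤ 1, the inequality |x̃₂ − x₂| ≤ ε |x̃₁ − x₁| holds if and only if either [(b + ω̃₂)ω₁ > (a + ω₂)ω̃₁ and κ₁ ≤ κ ≤ κ₂] or [(b + ω̃₂)ω₁ < (a + ω₂)ω̃₁ and κ₂ ≤ κ ≤ κ₁], where κ₁ = (a + ω₂)[(1 − ε)(b + ω̃₂) + ω̃₁] / [(b + ω̃₂)ω₁ − (a + ω₂)ω̃₁] and κ₂ = (a + ω₂)[(1 + ε)(b + ω̃₂) + ω̃₁] / [(b + ω̃₂)ω₁ − (a + ω₂)ω̃₁]. -/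
/-!
A regularized Newton step on a quadratic model leaves the derivative `-ω * (x₁ - x₀)`, so the second
step only rescales the first: `x₂ - x₁ = ω₁ / (a + ω₂) * (x₁ - x₀)`, and likewise for the other
model. In units of `x₁t - x₁` the two first displacements are `κ` and `κ + 1`, so the new distance
is `|1 + q - κ * (p - q)|` with `p = ω₁ / (a + ω₂)` and `q = ω₁t / (b + ω₂t)`. Bounding it by `ε`
confines `κ * (p - q)` to the interval with endpoints `1 + q ± ε`, and dividing by `p - q` gives the
two sign cases. The case `p = q` cannot occur because `0 < 1 + q - ε`.
-/

/-- The point reached from `x` by a trust-region step with multiplier `ω`, on a quadratic model of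
one variable with derivative `g` at `x` and second derivative `h`; used for both steps of both
models. It is `x` itself when `h + ω = 0`. -/
def regularizedNewtonStep {K : Type*} [Field K] (g h ω x : K) : K :=
  x - g / (h + ω)

section Field

variable {K : Type*} [Field K]

theorem add_mul_regularizedNewtonStep_sub {g h ω x : K} (hω : h + ω ≠ 0) :
    g + h * (regularizedNewtonStep g h ω x - x) = -ω * (regularizedNewtonStep g h ω x - x) := by
  unfold regularizedNewtonStep
  field_simp
  ring

theorem regularizedNewtonStep_second {g h ω ω' x₀ x₁ : K} (hω : h + ω ≠ 0)
    (hx₁ : x₁ = regularizedNewtonStep g h ω x₀) :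
    regularizedNewtonStep (g + h * (x₁ - x₀)) h ω' x₁ = x₁ + ω / (h + ω') * (x₁ - x₀) := by
  have hslope : g + h * (x₁ - x₀) = -ω * (x₁ - x₀) :=
    hx₁ ▸ add_mul_regularizedNewtonStep_sub hω
  rw [hslope, regularizedNewtonStep]
  ring

theorem sub_of_rescaled_displacements {A B p q x₀ x y : K} (hA : A ≠ 0) (hB : B ≠ 0)
    (hxy : y ≠ x) :
    (y + q / B * (y - x₀)) - (x + p / A * (x - x₀)) =
      (A * (B + q) - (x - x₀) / (y - x) * (B * p - A * q)) / (A * B) * (y - x) := by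
  have hd : y - x ≠ 0 := sub_ne_zero.mpr hxy
  field_simp
  ring

end Field

section LinearOrderedField

variable {K : Type*} [Field K] [LinearOrder K] [IsStrictOrderedRing K]

theorem abs_div_mul_le_mul_abs_iff {r s d ε : K} (hs : 0 < s) (hd : d ≠ 0) :
    |r / s * d| ≤ ε * |d| ↔ |r| ≤ ε * s := by
  rw [abs_mul, mul_le_mul_iff_left₀ (abs_pos.mpr hd), abs_div, abs_of_pos hs, div_le_iff₀ hs]

theorem le_mul_and_mul_le_iff_of_pos {l u d k : K} (hl : 0 < l) :
    l ≤ k * d ∧ k * d ≤ u ↔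
      (0 < d ∧ l / d ≤ k ∧ k ≤ u / d) ∨ (d < 0 ∧ u / d ≤ k ∧ k ≤ l / d) := by
  rcases lt_trichotomy d 0 with hd | rfl | hd
  · simp only [hd, hd.not_gt, false_and, true_and, false_or, div_le_iff_of_neg hd,
      le_div_iff_of_neg hd, and_comm]
  · simp only [mul_zero, hl.not_ge, lt_irrefl, false_and, or_self]
  · simp only [hd, hd.not_gt, false_and, true_and, or_false, div_le_iff₀ hd, le_div_iff₀ hd]

theorem stmt_2_general {a b gf gQ x₀ ω₁ ω₁t ω₂ ω₂t ε x₁ x₁t x₂ x₂t κ κ₁ κ₂ : K}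
    (ha1 : a + ω₁ ≠ 0) (hb1 : b + ω₁t ≠ 0) (ha2 : 0 < a + ω₂) (hb2 : 0 < b + ω₂t)
    (hx₁ : x₁ = regularizedNewtonStep gf a ω₁ x₀)
    (hx₁t : x₁t = regularizedNewtonStep gQ b ω₁t x₀)
    (hx₂ : x₂ = regularizedNewtonStep (gf + a * (x₁ - x₀)) a ω₂ x₁)
    (hx₂t : x₂t = regularizedNewtonStep (gQ + b * (x₁t - x₀)) b ω₂t x₁t)
    (hne : x₁t ≠ x₁) (hκ : κ = (x₁ - x₀) / (x₁t - x₁))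
    (hε : 0 < (1 - ε) * (b + ω₂t) + ω₁t)
    (hκ₁ : κ₁ = (a + ω₂) * ((1 - ε) * (b + ω₂t) + ω₁t) /
      ((b + ω₂t) * ω₁ - (a + ω₂) * ω₁t))
    (hκ₂ : κ₂ = (a + ω₂) * ((1 + ε) * (b + ω₂t) + ω₁t) /
      ((b + ω₂t) * ω₁ - (a + ω₂) * ω₁t)) :
    |x₂t - x₂| ≤ ε * |x₁t - x₁| ↔
      ((b + ω₂t) * ω₁ > (a + ω₂) * ω₁t ∧ κ₁ ≤ κ ∧ κ ≤ κ₂) ∨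
      ((b + ω₂t) * ω₁ < (a + ω₂) * ω₁t ∧ κ₂ ≤ κ ∧ κ ≤ κ₁) := by
  have hratio : x₂t - x₂ = ((a + ω₂) * (b + ω₂t + ω₁t) -
      κ * ((b + ω₂t) * ω₁ - (a + ω₂) * ω₁t)) / ((a + ω₂) * (b + ω₂t)) * (x₁t - x₁) := by
    rw [hx₂, hx₂t, regularizedNewtonStep_second ha1 hx₁, regularizedNewtonStep_second hb1 hx₁t,
      sub_of_rescaled_displacements ha2.ne' hb2.ne' hne, hκ]
  have hbounds : |x₂t - x₂| ≤ ε * |x₁t - x₁| ↔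
      (a + ω₂) * ((1 - ε) * (b + ω₂t) + ω₁t) ≤ κ * ((b + ω₂t) * ω₁ - (a + ω₂) * ω₁t) ∧
      κ * ((b + ω₂t) * ω₁ - (a + ω₂) * ω₁t) ≤ (a + ω₂) * ((1 + ε) * (b + ω₂t) + ω₁t) := by
    rw [hratio, abs_div_mul_le_mul_abs_iff (mul_pos ha2 hb2) (sub_ne_zero.mpr hne), abs_sub_comm,
      abs_sub_le_iff, and_comm]
    constructor <;> rintro ⟨hlower, hupper⟩ <;> constructor <;> linarith
  rw [hbounds, le_mul_and_mul_le_iff_of_pos (mul_pos ha2 hε), ← hκ₁, ← hκ₂, sub_pos, sub_neg]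

end LinearOrderedField

/-- Sufficient and necessary condition for distance reduction, 1-dimensional case. -/
theorem stmt_2 (a b gf gQ x₀ ω₁ ω₁t ω₂ ω₂t ε : ℝ)
    (hω₁ : 0 < ω₁) (hω₁t : 0 < ω₁t) (hω₂ : 0 < ω₂) (hω₂t : 0 < ω₂t)
    (ha1 : a + ω₁ ≠ 0) (hb1 : b + ω₁t ≠ 0)
    (ha : a < 0) (hb : b < 0) (ha2 : 0 < a + ω₂) (hb2 : 0 < b + ω₂t)
    (x₁ x₁t x₂ x₂t : ℝ)
    (hx₁ : x₁ = x₀ - gf / (a + ω₁))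
    (hx₁t : x₁t = x₀ - gQ / (b + ω₁t))
    (hx₂ : x₂ = x₁ - (gf + a * (x₁ - x₀)) / (a + ω₂))
    (hx₂t : x₂t = x₁t - (gQ + b * (x₁t - x₀)) / (b + ω₂t))
    (hne : x₁t ≠ x₁)
    (κ : ℝ) (hκ : κ = (x₁ - x₀) / (x₁t - x₁))
    (hε : 0 ≤ ε) (hε1 : ε ≤ 1)
    (κ₁ κ₂ : ℝ)
    (hκ₁ : κ₁ = (a + ω₂) * ((1 - ε) * (b + ω₂t) + ω₁t) /
      ((b + ω₂t) * ω₁ - (a + ω₂) * ω₁t))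
    (hκ₂ : κ₂ = (a + ω₂) * ((1 + ε) * (b + ω₂t) + ω₁t) /
      ((b + ω₂t) * ω₁ - (a + ω₂) * ω₁t)) :
    |x₂t - x₂| ≤ ε * |x₁t - x₁| ↔
      ((b + ω₂t) * ω₁ > (a + ω₂) * ω₁t ∧ κ₁ ≤ κ ∧ κ ≤ κ₂) ∨
      ((b + ω₂t) * ω₁ < (a + ω₂) * ω₁t ∧ κ₂ ≤ κ ∧ κ ≤ κ₁) := by
  exact stmt_2_general ha1 hb1 ha2 hb2 hx₁ hx₁t hx₂ hx₂t hne hκ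
    (add_pos_of_nonneg_of_pos (mul_nonneg (sub_nonneg.mpr hε1) hb2.le) hω₁t) hκ₁ hκ₂
end

section
/- Under the one-dimensional two-step trust-region setup with a < 0, b < 0, a + ω₂ > 0, b + ω̃₂ > 0 and x̃₁ ≠ x₁, if κ := (x₁ − x₀)/(x̃₁ − x₁) satisfies −1 < κ < 0 (equivalently, x̃₁ ≤ x₀ < x₁ or x₁ < x₀ ≤ x̃₁), then there does not exist an ε with 0 < ε < 1 such that |x̃₂ − x₂| ≤ ε |x̃₁ − x₁|; that is, for every ε with 0 < ε < 1 one has |x̃₂ − x₂| > ε |x̃₁ − x₁|. -/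
/-!
The first-order condition for a regularized step says that the model derivative at its endpoint `x₁`
is `-ω₁ * (x₁ - x₀)`, so the second step continues the first one in the same direction:
`x₂ = x₁ + ω₁ / (a + ω₂) * (x₁ - x₀)`. The condition on `κ` says that the two first iterates lie on
opposite sides of `x₀`, so continuing in the same directions drives them further apart.
-/

section Extrapolation

variable {R : Type*} [CommRing R] [LinearOrder R] [IsStrictOrderedRing R] {p q x r s : R}

theorem sub_lt_extrapolate_sub_extrapolate (hr : 0 < r) (hs : 0 < s) (hpx : p ≤ x) (hxq : x ≤ q)
    (hpq : p < q) : q - p < (q + s * (q - x)) - (p + r * (p - x)) := by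
  have hgap : 0 < s * (q - x) + r * (x - p) := by
    rcases hxq.eq_or_lt with rfl | hxq
    · simpa using mul_pos hr (sub_pos.mpr hpq)
    · exact add_pos_of_pos_of_nonneg (mul_pos hs (sub_pos.mpr hxq))
        (mul_nonneg hr.le (sub_nonneg.mpr hpx))
  linarith

theorem abs_sub_lt_abs_extrapolate_sub_extrapolate (hr : 0 < r) (hs : 0 < s) (hqp : q ≠ p)
    (hx : x ∈ Set.uIcc p q) : |q - p| < |(q + s * (q - x)) - (p + r * (p - x))| := by
  wlog hpq : p < q generalizing p q r s
  · rw [abs_sub_comm q, abs_sub_comm (q + _)]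
    exact this hs hr hqp.symm (Set.uIcc_comm p q ▸ hx) (hqp.lt_of_le (not_lt.mp hpq))
  · rw [Set.uIcc_of_lt hpq] at hx
    rw [abs_of_pos (sub_pos.mpr hpq)]
    exact (sub_lt_extrapolate_sub_extrapolate hr hs hx.1 hx.2 hpq).trans_le (le_abs_self _)

end Extrapolation

theorem mem_uIcc_of_div_sub_mem_Icc {K : Type*} [Field K] [LinearOrder K] [IsStrictOrderedRing K]
    {p q x : K} (hqp : q ≠ p) (h : (p - x) / (q - p) ∈ Set.Icc (-1) 0) : x ∈ Set.uIcc p q := by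
  obtain ⟨hlower, hupper⟩ := h
  rcases hqp.lt_or_gt with hqp | hpq
  · rw [le_div_iff_of_neg (sub_neg.mpr hqp)] at hlower
    rw [div_le_iff_of_neg (sub_neg.mpr hqp)] at hupper
    exact Set.mem_uIcc_of_ge (by linarith) (by linarith)
  · rw [le_div_iff₀ (sub_pos.mpr hpq)] at hlower
    rw [div_le_iff₀ (sub_pos.mpr hpq)] at hupper
    exact Set.mem_uIcc_of_le (by linarith) (by linarith)

/-- The one-dimensional trust-region step from `x` with multiplier `ω`, for a quadratic model with
derivative `g` at `x` and second derivative `a`: the critical point `y` of the regularized model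
`g * (y - x) + (a + ω) * (y - x) ^ 2 / 2`. It is the junk value `x` when `a + ω = 0`. -/
def trustRegionStep {K : Type*} [Field K] (a g ω x : K) : K :=
  x - g / (a + ω)

section TrustRegionStep

variable {K : Type*} [Field K] {a g ω₁ x₀ x₁ : K}

theorem deriv_trustRegionStep_eq_neg_mul (h : a + ω₁ ≠ 0) (hx₁ : x₁ = trustRegionStep a g ω₁ x₀) :
    g + a * (x₁ - x₀) = -(ω₁ * (x₁ - x₀)) := by
  have hcritical : (a + ω₁) * (x₁ - x₀) = -g := by
    rw [hx₁, trustRegionStep, sub_sub_cancel_left, mul_neg, mul_div_cancel₀ _ h]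
  linear_combination hcritical

theorem trustRegionStep_trustRegionStep_eq_extrapolate (ω₂ : K) (h : a + ω₁ ≠ 0)
    (hx₁ : x₁ = trustRegionStep a g ω₁ x₀) :
    trustRegionStep a (g + a * (x₁ - x₀)) ω₂ x₁ = x₁ + ω₁ / (a + ω₂) * (x₁ - x₀) := by
  rw [trustRegionStep, deriv_trustRegionStep_eq_neg_mul h hx₁]
  ring

end TrustRegionStep

theorem stmt_4_general {K : Type*} [Field K] [LinearOrder K] [IsStrictOrderedRing K]
    {a b gf gQ x₀ ω₁ ω₁t ω₂ ω₂t : K} (hω₁ : 0 < ω₁) (hω₁t : 0 < ω₁t)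
    (ha1 : a + ω₁ ≠ 0) (hb1 : b + ω₁t ≠ 0) (ha2 : 0 < a + ω₂) (hb2 : 0 < b + ω₂t)
    {x₁ x₁t x₂ x₂t : K}
    (hx₁ : x₁ = trustRegionStep a gf ω₁ x₀)
    (hx₁t : x₁t = trustRegionStep b gQ ω₁t x₀)
    (hx₂ : x₂ = trustRegionStep a (gf + a * (x₁ - x₀)) ω₂ x₁)
    (hx₂t : x₂t = trustRegionStep b (gQ + b * (x₁t - x₀)) ω₂t x₁t)
    (hne : x₁t ≠ x₁) (hx₀ : x₀ ∈ Set.uIcc x₁ x₁t) :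
    |x₁t - x₁| < |x₂t - x₂| := by
  rw [hx₂, hx₂t, trustRegionStep_trustRegionStep_eq_extrapolate ω₂ ha1 hx₁,
    trustRegionStep_trustRegionStep_eq_extrapolate ω₂t hb1 hx₁t]
  exact abs_sub_lt_abs_extrapolate_sub_extrapolate (div_pos hω₁ ha2) (div_pos hω₁t hb2) hne hx₀

/-- 1-dimensional case: if `−1 < κ < 0` then no `ε ∈ (0,1)` gives the
contraction `|x̃₂ − x₂| ≤ ε |x̃₁ − x₁|`. -/
theorem stmt_4 (a b gf gQ x₀ ω₁ ω₁t ω₂ ω₂t : ℝ)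
    (hω₁ : 0 < ω₁) (hω₁t : 0 < ω₁t) (hω₂ : 0 < ω₂) (hω₂t : 0 < ω₂t)
    (ha1 : a + ω₁ ≠ 0) (hb1 : b + ω₁t ≠ 0)
    (ha : a < 0) (hb : b < 0) (ha2 : 0 < a + ω₂) (hb2 : 0 < b + ω₂t)
    (x₁ x₁t x₂ x₂t : ℝ)
    (hx₁ : x₁ = x₀ - gf / (a + ω₁))
    (hx₁t : x₁t = x₀ - gQ / (b + ω₁t))
    (hx₂ : x₂ = x₁ - (gf + a * (x₁ - x₀)) / (a + ω₂))
    (hx₂t : x₂t = x₁t - (gQ + b * (x₁t - x₀)) / (b + ω₂t))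
    (hne : x₁t ≠ x₁)
    (κ : ℝ) (hκ : κ = (x₁ - x₀) / (x₁t - x₁))
    (hκneg : -1 < κ) (hκ₀ : κ < 0) :
    ∀ ε : ℝ, 0 < ε → ε < 1 → ε * |x₁t - x₁| < |x₂t - x₂| := by
  intro ε _ hε1
  have hx₀ : x₀ ∈ Set.uIcc x₁ x₁t := mem_uIcc_of_div_sub_mem_Icc hne (hκ ▸ ⟨hκneg.le, hκ₀.le⟩)
  exact (mul_le_of_le_one_left (abs_nonneg _) hε1.le).trans_lt
    (stmt_4_general hω₁ hω₁t ha1 hb1 ha2 hb2 hx₁ hx₁t hx₂ hx₂t hne hx₀)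
end

section
/- Under the n-dimensional diagonal two-step trust-region setup, suppose x̃₁ ≠ x₁ and there are real numbers κ⁽¹⁾, …, κ⁽ⁿ⁾ with κ⁽ⁱ⁾ (x̃₁⁽ⁱ⁾ − x₁⁽ⁱ⁾) = x₁⁽ⁱ⁾ − x₀⁽ⁱ⁾ for every i. If −1 < κ⁽ⁱ⁾ < 0 for every i (equivalently, for each i, x̃₁⁽ⁱ⁾ ≤ x₀⁽ⁱ⁾ < x₁⁽ⁱ⁾ or x₁⁽ⁱ⁾ < x₀⁽ⁱ⁾ ≤ x̃₁⁽ⁱ⁾), then there does not exist an ε with 0 < ε < 1 such that ‖x̃₂ − x₂‖₂ ≤ ε ‖x̃₁ − x₁‖₂; that is, for every ε with 0 < ε < 1 one has ‖x̃₂ − x₂‖₂ > ε ‖x̃₁ − x₁‖₂ in the Euclidean norm. -/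
/-!
For a quadratic model with Hessian `A`, the first step `y = x - (A + ω)⁻¹ g` leaves the gradient
`g + A (y - x) = -ω (y - x)`, so the second step prolongs the first one by `ω (A + ω')⁻¹ (y - x)`.
In the diagonal case every coordinate is therefore pushed further away from `x`, in the direction
it has already taken. The condition `-1 < κ⁽ⁱ⁾ < 0` says that `x₀⁽ⁱ⁾` lies between the two first
iterates, so the two prolongations point in opposite directions and each coordinate of the
difference of the iterates grows in absolute value.
-/

section SecondStep

variable {ι : Type*} [Fintype ι] [DecidableEq ι]

theorem add_mulVec_sub_eq_neg_smul_of_eq_sub_inv_mulVec {R : Type*} [CommRing R]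
    {A : Matrix ι ι R} {ω : R} {g x y : ι → R} (hA : IsUnit (A + ω • 1))
    (hy : y = x - (A + ω • 1)⁻¹.mulVec g) :
    g + A.mulVec (y - x) = -(ω • (y - x)) := by
  have first_step_eq : (A + ω • 1).mulVec (y - x) = -g := by
    rw [hy, sub_sub_cancel_left, Matrix.mulVec_neg, Matrix.mulVec_mulVec,
      Matrix.mul_nonsing_inv _ ((Matrix.isUnit_iff_isUnit_det _).mp hA), Matrix.one_mulVec]
  rw [Matrix.add_mulVec, Matrix.smul_mulVec, Matrix.one_mulVec] at first_step_eq
  linear_combination first_step_eq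

variable {K : Type*} [Field K] {a g x y z : ι → K} {ω ω' : K}

theorem isUnit_diagonal_add_smul_one_iff :
    IsUnit (Matrix.diagonal a + ω • 1) ↔ ∀ i, a i + ω ≠ 0 := by
  rw [Matrix.smul_one_eq_diagonal, Matrix.diagonal_add, Matrix.isUnit_diagonal, Pi.isUnit_iff]
  exact forall_congr' fun _ => isUnit_iff_ne_zero

theorem inv_diagonal_add_smul_one_mulVec_apply (h : ∀ i, a i + ω ≠ 0) (v : ι → K) (i : ι) :
    (Matrix.diagonal a + ω • 1)⁻¹.mulVec v i = v i / (a i + ω) := by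
  have inv_eq : (Matrix.diagonal a + ω • 1)⁻¹ = Matrix.diagonal fun j => (a j + ω)⁻¹ := by
    refine Matrix.inv_eq_right_inv ?_
    rw [Matrix.smul_one_eq_diagonal, Matrix.diagonal_add, Matrix.diagonal_mul_diagonal,
      ← Matrix.diagonal_one]
    exact congrArg Matrix.diagonal (funext fun j => mul_inv_cancel₀ (h j))
  rw [inv_eq, Matrix.mulVec_diagonal, inv_mul_eq_div]

theorem second_step_apply_eq_add_mul_first_step (h : ∀ i, a i + ω ≠ 0) (h' : ∀ i, a i + ω' ≠ 0)
    (hy : y = x - (Matrix.diagonal a + ω • 1)⁻¹.mulVec g)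
    (hz : z = y - (Matrix.diagonal a + ω' • 1)⁻¹.mulVec
      (g + (Matrix.diagonal a).mulVec (y - x))) (i : ι) :
    z i = y i + ω / (a i + ω') * (y i - x i) := by
  rw [hz,
    add_mulVec_sub_eq_neg_smul_of_eq_sub_inv_mulVec (isUnit_diagonal_add_smul_one_iff.mpr h) hy,
    Pi.sub_apply, inv_diagonal_add_smul_one_mulVec_apply h']
  simp only [Pi.neg_apply, Pi.smul_apply, Pi.sub_apply, smul_eq_mul]
  ring

end SecondStep

section Between

variable {K : Type*} [Field K] [LinearOrder K] [IsStrictOrderedRing K] {x y y' : K}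

theorem mem_uIcc_of_mul_sub_eq {κ : K} (hκ : κ ∈ Set.Icc (-1) 0)
    (h : κ * (y' - y) = y - x) : x ∈ Set.uIcc y y' := by
  have x_eq : x = AffineMap.lineMap y y' (-κ) := by
    rw [AffineMap.lineMap_apply_ring']
    linear_combination h
  rw [x_eq, ← segment_eq_uIcc, segment_eq_image_lineMap]
  exact Set.mem_image_of_mem _ ⟨neg_nonneg.mpr hκ.2, neg_le.mp hκ.1⟩

theorem abs_sub_lt_abs_sub_of_mem_uIcc {s s' : K} (hs : 0 < s) (hs' : 0 < s')
    (hx : x ∈ Set.uIcc y y') (hne : y ≠ y') :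
    |y' - y| < |y' + s' * (y' - x) - (y + s * (y - x))| := by
  wlog hle : y ≤ y' generalizing y y' s s'
  · rw [abs_sub_comm y' y, abs_sub_comm (y' + _)]
    exact this hs' hs (Set.uIcc_comm y y' ▸ hx) hne.symm (le_of_not_ge hle)
  obtain ⟨hyx, hxy'⟩ := Set.uIcc_of_le hle ▸ hx
  have prolongation_pos : 0 < s' * (y' - x) + s * (x - y) := by
    rcases hxy'.eq_or_lt with rfl | hlt
    · simpa using mul_pos hs (sub_pos.mpr (hle.lt_of_ne hne))
    · exact add_pos_of_pos_of_nonneg (mul_pos hs' (sub_pos.mpr hlt))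
        (mul_nonneg hs.le (sub_nonneg.mpr hyx))
  rw [abs_of_nonneg (sub_nonneg.mpr hle)]
  exact lt_of_lt_of_le (by linear_combination prolongation_pos) (le_abs_self _)

end Between

theorem piLp_norm_lt_norm_of_forall_le_of_exists_lt {ι : Type*} [Fintype ι] {β : ι → Type*}
    [∀ i, SeminormedAddCommGroup (β i)] {p : ENNReal} (hp : 0 < p.toReal) {u v : PiLp p β}
    (hle : ∀ i, ‖u i‖ ≤ ‖v i‖) (hlt : ∃ i, ‖u i‖ < ‖v i‖) : ‖u‖ < ‖v‖ := by
  obtain ⟨i, hi⟩ := hlt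
  rw [PiLp.norm_eq_sum hp, PiLp.norm_eq_sum hp]
  refine Real.rpow_lt_rpow (by positivity) ?_ (by positivity)
  exact Finset.sum_lt_sum
    (fun j _ => Real.rpow_le_rpow (norm_nonneg _) (hle j) hp.le)
    ⟨i, Finset.mem_univ i, Real.rpow_lt_rpow (norm_nonneg _) hi hp⟩

theorem stmt_8_general {ι : Type*} [Fintype ι] [DecidableEq ι] {p : ENNReal} (hp : 0 < p.toReal)
    {a b gf gQ x₀ x₁ x₁t x₂ x₂t : ι → ℝ} {ω₁ ω₁t ω₂ ω₂t : ℝ} (hω₁ : 0 < ω₁) (hω₁t : 0 < ω₁t)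
    (ha1 : ∀ i, a i + ω₁ ≠ 0) (hb1 : ∀ i, b i + ω₁t ≠ 0)
    (ha2 : ∀ i, 0 < a i + ω₂) (hb2 : ∀ i, 0 < b i + ω₂t)
    (hx₁ : x₁ = x₀ - (Matrix.diagonal a + ω₁ • 1)⁻¹.mulVec gf)
    (hx₁t : x₁t = x₀ - (Matrix.diagonal b + ω₁t • 1)⁻¹.mulVec gQ)
    (hx₂ : x₂ = x₁ -
      (Matrix.diagonal a + ω₂ • 1)⁻¹.mulVec (gf + (Matrix.diagonal a).mulVec (x₁ - x₀)))
    (hx₂t : x₂t = x₁t -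
      (Matrix.diagonal b + ω₂t • 1)⁻¹.mulVec (gQ + (Matrix.diagonal b).mulVec (x₁t - x₀)))
    (hne : x₁t ≠ x₁) (hx₀ : ∀ i, x₀ i ∈ Set.uIcc (x₁ i) (x₁t i)) :
    ‖WithLp.toLp p (x₁t - x₁)‖ < ‖WithLp.toLp p (x₂t - x₂)‖ := by
  have coord_lt (i : ι) (hi : x₁ i ≠ x₁t i) : ‖x₁t i - x₁ i‖ < ‖x₂t i - x₂ i‖ := by
    rw [second_step_apply_eq_add_mul_first_step ha1 (fun j => (ha2 j).ne') hx₁ hx₂,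
      second_step_apply_eq_add_mul_first_step hb1 (fun j => (hb2 j).ne') hx₁t hx₂t]
    exact abs_sub_lt_abs_sub_of_mem_uIcc (div_pos hω₁ (ha2 i)) (div_pos hω₁t (hb2 i)) (hx₀ i) hi
  have coord_le (i : ι) : ‖x₁t i - x₁ i‖ ≤ ‖x₂t i - x₂ i‖ := by
    by_cases hi : x₁ i = x₁t i
    · simp [hi]
    · exact (coord_lt i hi).le
  obtain ⟨i, hi⟩ := Function.ne_iff.mp hne
  exact piLp_norm_lt_norm_of_forall_le_of_exists_lt hp coord_le ⟨i, coord_lt i hi.symm⟩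

/-- No contraction in the `n`-dimensional diagonal case when every `κ⁽ⁱ⁾ ∈ (−1, 0)`. -/
theorem stmt_8 (n : ℕ) (hn : 1 ≤ n) (a b : Fin n → ℝ) (gf gQ x₀ : Fin n → ℝ)
    (ω₁ ω₁t ω₂ ω₂t : ℝ)
    (hω₁ : 0 < ω₁) (hω₁t : 0 < ω₁t) (hω₂ : 0 < ω₂) (hω₂t : 0 < ω₂t)
    (ha1 : ∀ i, a i + ω₁ ≠ 0) (hb1 : ∀ i, b i + ω₁t ≠ 0)
    (ha2 : ∀ i, 0 < a i + ω₂) (hb2 : ∀ i, 0 < b i + ω₂t)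
    (x₁ x₁t x₂ x₂t : Fin n → ℝ)
    (hx₁ : x₁ = x₀ - (Matrix.diagonal a + ω₁ • 1)⁻¹.mulVec gf)
    (hx₁t : x₁t = x₀ - (Matrix.diagonal b + ω₁t • 1)⁻¹.mulVec gQ)
    (hx₂ : x₂ = x₁ -
      (Matrix.diagonal a + ω₂ • 1)⁻¹.mulVec (gf + (Matrix.diagonal a).mulVec (x₁ - x₀)))
    (hx₂t : x₂t = x₁t -
      (Matrix.diagonal b + ω₂t • 1)⁻¹.mulVec (gQ + (Matrix.diagonal b).mulVec (x₁t - x₀)))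
    (hne : x₁t ≠ x₁)
    (κ : Fin n → ℝ) (hκ : ∀ i, κ i * (x₁t i - x₁ i) = x₁ i - x₀ i)
    (hκneg : ∀ i, -1 < κ i) (hκ0 : ∀ i, κ i < 0) :
    ∀ ε : ℝ, 0 < ε → ε < 1 →
      ε * ‖(WithLp.equiv 2 (Fin n → ℝ)).symm (x₁t - x₁)‖ <
        ‖(WithLp.equiv 2 (Fin n → ℝ)).symm (x₂t - x₂)‖ := by
  intro ε _ hε
  have hx₀ (i : Fin n) : x₀ i ∈ Set.uIcc (x₁ i) (x₁t i) :=
    mem_uIcc_of_mul_sub_eq ⟨(hκneg i).le, (hκ0 i).le⟩ (hκ i)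
  exact (mul_le_of_le_one_left (norm_nonneg _) hε.le).trans_lt <|
    stmt_8_general (by norm_num) hω₁ hω₁t ha1 hb1 ha2 hb2 hx₁ hx₁t hx₂ hx₂t hne hx₀
end
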